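/- Let P be a finite poset, (S_*(P), δ_*, φ) a synor complex for P, x ∈ P, γ ∈ S_i(P)^{(x)} a principal synor chain, and 0 ≤ ℓ ≤ i. Then φ(γ) = Σ_{χ ∈ X_ℓ^γ} χ*φ(ζ_χ), where each ζ_χ is a cycle in ⊕_{y < min(χ)} S_{i−ℓ−1}(P)^{(y)}. -/

import Mathlib

open Finsupp

noncomputable section

variable (K : Type) [Field K]

section Core
variable (P : Type) [Preorder P]

/-- Order chains with `n` elements of the poset `P`, written as strictly
decreasing tuples `(x₀ > x₁ > ⋯ > x_{n-1})`. -/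
def OChain (n : ℕ) : Type := {c : Fin n → P // StrictAnti c}

/-- The chain group in "level" `n`: the `K`-vector space with basis the order chains with
`n` elements.  Level `n` corresponds to homological degree `n - 1`; in particular
`CGrp K P 0 ≅ K` is the reduced part `C̃₋₁`. -/
abbrev CGrp (n : ℕ) : Type := OChain P n →₀ K

/-- Deletion of the `k`-th entry of an order chain. -/
def odel {n : ℕ} (k : Fin (n + 1)) (c : OChain P (n + 1)) : OChain P n :=
  ⟨c.1 ∘ k.succAbove, c.2.comp_strictMono (Fin.strictMono_succAbove k)⟩

/-- The simplicial boundary map (of the reduced simplicial chain complex of the order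
complex), from level `n+1` to level `n`. -/
def cbdry (n : ℕ) : CGrp K P (n + 1) →ₗ[K] CGrp K P n :=
  Finsupp.lsum K fun c => ∑ k : Fin (n + 1), ((-1 : K) ^ (k : ℕ)) • Finsupp.lsingle (odel P k c)

/-- The cycles in level `n` (every level-0 chain, i.e. multiple of the empty chain,
is a cycle). -/
def cyclesAt : (n : ℕ) → Submodule K (CGrp K P n)
  | 0 => ⊤
  | (n + 1) => LinearMap.ker (cbdry K P n)

/-- The boundaries in level `n`. -/
def boundariesIn (n : ℕ) : Submodule K (CGrp K P n) :=
  LinearMap.range (cbdry K P n)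

/-- `H̃_{n-1}(P) ≠ 0`: nontriviality of the reduced simplicial homology (with coefficients
in `K`) of the order complex of `P` in degree `n - 1` (level `n`). -/
def RHomNontrivial (n : ℕ) : Prop := ¬ cyclesAt K P n ≤ boundariesIn K P n

/-- The subspace of chains all of whose elements lie in the subset `J ⊆ P`
(the chain group of the subposet `J`). -/
def chainsIn (J : Set P) (n : ℕ) : Submodule K (CGrp K P n) :=
  Finsupp.supported K K {c : OChain P n | ∀ r, c.1 r ∈ J}

/-- Transport of chain groups along an equality of levels. -/
def castCGrp {a b : ℕ} (h : a = b) : CGrp K P a ≃ₗ[K] CGrp K P b :=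
  Finsupp.domLCongr (Equiv.cast (congrArg (OChain P) h))

end Core


section Synor
variable (P : Type) [PartialOrder P]

/-- For a family `S` of graded pieces (with `S n x` the piece of homological degree `n`,
i.e. level `n+1`, sitting over `x ∈ P`) and a subset `J ⊆ P`, the part of the complex
lying over `J`: at level `0` it is all of `C̃₋₁ = K`, and at level `n+1` it is
`⊕_{x ∈ J} S_n^{(x)}`. -/
def idealPart (S : (n : ℕ) → P → Submodule K (CGrp K P (n + 1))) (J : Set P) :
    (nn : ℕ) → Submodule K (CGrp K P nn)
  | 0 => ⊤
  | (n + 1) => ⨆ x ∈ J, S n x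

/-- A synor complex for the finite poset `P`: a strictly `P`-graded subcomplex
`S_*(P) ⊆ C̃_*(P)` of the reduced simplicial chain complex of the order complex of `P`
(we identify the injective `P`-graded chain map `φ` with the inclusion of its image) with:
`S_i(P) = ⊕_{x ∈ P} S_i(P)^{(x)}` with `S_i(P)^{(x)}` contained in the span of the order
chains with largest element `x` (`graded`); `∂(S_i(P)^{(x)}) ⊆ ⊕_{y<x} S_{i-1}(P)^{(y)}`
(`strict`; for degree `0` the boundary lands in `C̃₋₁ = K` automatically); (S1)
`dim_K S_i(P)^{(x)} = dim_K H̃_{i-1}(P_{<x})` (`dim_eq`, the dimension of the reduced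
homology being the dimension of the cycles minus the dimension of the boundaries); and
(S2) for every order ideal `J ⊆ P` the inclusion `S_*(P)^J ⊆ C̃_*(J)` induces an
isomorphism on homology (`quasiIso`: surjectivity and injectivity of the induced map). -/
structure SynorComplex : Type where
  S : (n : ℕ) → P → Submodule K (CGrp K P (n + 1))
  graded : ∀ (n : ℕ) (x : P),
    S n x ≤ Finsupp.supported K K {c : OChain P (n + 1) | c.1 0 = x}
  strict : ∀ (n : ℕ) (x : P), ∀ f ∈ S (n + 1) x,
    cbdry K P (n + 1) f ∈ ⨆ y ∈ Set.Iio x, S n y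
  dim_eq : ∀ (n : ℕ) (x : P),
    Module.finrank K ↥(S n x) =
      Module.finrank K ↥(cyclesAt K {y : P // y < x} n) -
        Module.finrank K ↥(boundariesIn K {y : P // y < x} n)
  quasiIso : ∀ J : Set P, IsLowerSet J → ∀ nn : ℕ,
    (∀ z ∈ cyclesAt K P nn ⊓ chainsIn K P J nn,
        ∃ a ∈ cyclesAt K P nn ⊓ idealPart K P S J nn,
          z - a ∈ Submodule.map (cbdry K P nn) (chainsIn K P J (nn + 1))) ∧
    (∀ a ∈ idealPart K P S J nn,
        a ∈ Submodule.map (cbdry K P nn) (chainsIn K P J (nn + 1)) →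
        a ∈ Submodule.map (cbdry K P nn) (idealPart K P S J (nn + 1)))

end Synor

section Repr
variable (P : Type) [PartialOrder P]

/-- Concatenation `χ * c` of two order chains, valid when every entry of `c` is strictly
below every entry of `χ`. -/
def concatOC {a b : ℕ} (χ : OChain P a) (c : OChain P b)
    (h : ∀ (s : Fin b) (r : Fin a), c.1 s < χ.1 r) : OChain P (a + b) :=
  ⟨fun r => if hr : (r : ℕ) < a then χ.1 ⟨r, hr⟩
            else c.1 ⟨(r : ℕ) - a, by have := r.2; omega⟩, by
    intro p q hpq
    dsimp only
    rcases lt_or_ge (q : ℕ) a with hq | hq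
    · have hp : (p : ℕ) < a := by have := Fin.lt_def.mp hpq; omega
      rw [dif_pos hp, dif_pos hq]
      exact χ.2 (Fin.mk_lt_mk.mpr (Fin.lt_def.mp hpq))
    · rw [dif_neg (not_lt.mpr hq)]
      rcases lt_or_ge (p : ℕ) a with hp | hp
      · rw [dif_pos hp]
        exact h _ _
      · rw [dif_neg (not_lt.mpr hp)]
        exact c.2 (Fin.mk_lt_mk.mpr (by have := Fin.lt_def.mp hpq; omega))⟩

open Classical in
/-- The linear map `χ * (-)` prepending the order chain `χ` to every order chain of a
chain (declared as `0` on the basis chains that are not entirely below `χ`). -/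
def prependC {a b : ℕ} (χ : OChain P a) : CGrp K P b →ₗ[K] CGrp K P (a + b) :=
  Finsupp.lsum K fun c =>
    if h : ∀ (s : Fin b) (r : Fin a), c.1 s < χ.1 r then
      Finsupp.lsingle (concatOC P χ c h)
    else 0

/-- `X_ℓ^γ` (for `s = ℓ + 1`): the set of order chains with `s` elements occurring as
initial segments of order chains in the support of `γ`. -/
def initSegs {m : ℕ} (γ : CGrp K P (m + 1)) (s : ℕ) (h : s ≤ m + 1) :
    Set (OChain P s) :=
  {χ | ∃ c ∈ γ.support, ∀ r : Fin s, c.1 (Fin.castLE h r) = χ.1 r}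

end Repr

/-!
Write `γ ∈ S_n^{(y)}` as `y * ζ`. Then `∂γ = ζ - y * ∂ζ`, where `ζ` is supported on chains below `y`
and `y * ∂ζ` on chains with largest element `y`. Strictness puts `∂γ` below `y`, so `ζ = ∂γ` and
`∂ζ = 0`: the coefficient of `y` is a cycle lying in `⊕_{z < y} S_{n-1}^{(z)}`. This is again a sum
of principal chains, so the elements of `χ` can be split off one after the other.
-/

section Finsupp
variable {α β M R : Type*}

@[elab_as_elim]
theorem supported_induction [Semiring R] [AddCommMonoid M] [Module R M] {s : Set α}
    {p : (α →₀ M) → Prop} (zero : p 0) (add : ∀ f g, p f → p g → p (f + g))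
    (single : ∀ a ∈ s, ∀ m, p (single a m)) {f : α →₀ M} (hf : f ∈ supported M R s) : p f := by
  rw [← f.sum_single]
  exact Finset.sum_induction _ p add zero fun a ha => single a (hf ha) _

open Classical in
theorem finsum_mem_image_support_filter [AddCommMonoid M] (f : α →₀ M) (g : α → β) :
    ∑ᶠ b ∈ g '' f.support, f.filter (g · = b) = f := by
  calc ∑ᶠ b ∈ g '' f.support, f.filter (g · = b)
    _ = ∑ b ∈ f.support.image g, ∑ a ∈ f.support with g a = b, single a (f a) := by
      rw [← Finset.coe_image, finsum_mem_coe_finset]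
      exact Finset.sum_congr rfl fun b _ => f.filter_eq_sum _
    _ = f.sum single :=
      Finset.sum_fiberwise_of_maps_to (fun a ha => Finset.mem_image_of_mem g ha) _
    _ = f := f.sum_single

end Finsupp

variable {K}

section Preorder
variable {P : Type} [Preorder P]

namespace OChain

@[ext]
theorem ext {n : ℕ} {c d : OChain P n} (h : ∀ r, c.1 r = d.1 r) : c = d :=
  Subtype.ext (funext h)

/-- The initial segment with `a` elements of an order chain. -/
def take {a N : ℕ} (h : a ≤ N) (d : OChain P N) : OChain P a :=
  ⟨fun r => d.1 (r.castLE h), fun _ _ hrs => d.2 hrs⟩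

/-- The order chain that remains after removing the initial segment with `a` elements. -/
def drop {a b N : ℕ} (h : a + b = N) (d : OChain P N) : OChain P b :=
  ⟨fun s => d.1 ((s.natAdd a).cast h), fun _ _ hrs => d.2 (Nat.add_lt_add_left hrs a)⟩

theorem drop_lt_take {a b N : ℕ} (h : a + b = N) (d : OChain P N) (s : Fin b) (r : Fin a) :
    (d.drop h).1 s < (d.take (Nat.le.intro h)).1 r :=
  d.2 (r.2.trans_le (Nat.le_add_right a s))

theorem take_eq_iff {a N : ℕ} (h : a ≤ N) {d : OChain P N} {χ : OChain P a} :
    d.take h = χ ↔ ∀ r, d.1 (r.castLE h) = χ.1 r :=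
  Subtype.ext_iff.trans funext_iff

theorem take_succ_eq_iff {a b N : ℕ} (h : a + (b + 1) = N) (h' : a + 1 ≤ N) {d : OChain P N}
    {χ : OChain P (a + 1)} :
    d.take h' = χ ↔
      d.take (Nat.le.intro h) = χ.take a.le_succ ∧ (d.drop h).1 0 = χ.1 (Fin.last a) := by
  rw [take_eq_iff, take_eq_iff, Fin.forall_fin_succ']
  rfl

theorem odel_zero_drop {a b N : ℕ} (h : a + (b + 1) = N) (h' : a + 1 + b = N)
    (d : OChain P N) : odel P 0 (d.drop h) = d.drop h' :=
  ext fun s => congrArg d.1 (Fin.ext (show a + (s + 1) = a + 1 + s by omega))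

theorem odel_succ_apply_zero {n : ℕ} (j : Fin (n + 1)) (d : OChain P (n + 2)) :
    (odel P j.succ d).1 0 = d.1 0 :=
  congrArg d.1 (Fin.succ_succAbove_zero j)

theorem odel_zero_odel_succ {n : ℕ} (j : Fin (n + 1)) (d : OChain P (n + 2)) :
    odel P 0 (odel P j.succ d) = odel P j (odel P 0 d) :=
  ext fun s => congrArg d.1 (Fin.succ_succAbove_succ j s)

theorem odel_zero_lt {n : ℕ} (d : OChain P (n + 1)) (r : Fin n) : (odel P 0 d).1 r < d.1 0 :=
  d.2 r.succ_pos

end OChain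

theorem cbdry_single {n : ℕ} (d : OChain P (n + 1)) (k : K) :
    cbdry K P n (single d k) =
      ∑ j : Fin (n + 1), ((-1 : K) ^ (j : ℕ)) • single (odel P j d) k := by
  simp [cbdry]

variable (K)

/-- The chains with largest element `y`, that is, `C̃_n(P)^{(y)}`. -/
abbrev toppedBy (y : P) (n : ℕ) : Submodule K (CGrp K P (n + 1)) :=
  supported K K {c : OChain P (n + 1) | c.1 0 = y}

open Classical in
/-- The chain `ζ` in the decomposition `f = y * ζ + (chains whose largest element is not y)`. -/
def topCoeff {n : ℕ} (y : P) : CGrp K P (n + 1) →ₗ[K] CGrp K P n :=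
  lsum K fun d => if d.1 0 = y then lsingle (odel P 0 d) else 0

open Classical in
/-- The chain `ζ` in the decomposition
`f = χ * ζ + (chains whose initial segment of length a is not χ)`. The lengths are related by an
equation rather than by `N = a + b`, since `N` is `m + 1` and `b` is `m - ℓ` in applications. -/
def prefixCoeff {a b N : ℕ} (h : a + b = N) (χ : OChain P a) : CGrp K P N →ₗ[K] CGrp K P b :=
  lsum K fun d => if d.take (Nat.le.intro h) = χ then lsingle (d.drop h) else 0

variable {K}

open Classical in
theorem topCoeff_single {n : ℕ} (y : P) (d : OChain P (n + 1)) (k : K) :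
    topCoeff K y (single d k) = if d.1 0 = y then single (odel P 0 d) k else 0 := by
  split_ifs with hd <;> simp [topCoeff, hd]

theorem topCoeff_single_of_eq {n : ℕ} {y : P} {d : OChain P (n + 1)} (hd : d.1 0 = y) (k : K) :
    topCoeff K y (single d k) = single (odel P 0 d) k := by
  rw [topCoeff_single, if_pos hd]

theorem topCoeff_single_of_ne {n : ℕ} {y : P} {d : OChain P (n + 1)} (hd : d.1 0 ≠ y) (k : K) :
    topCoeff K y (single d k) = 0 := by
  rw [topCoeff_single, if_neg hd]

theorem topCoeff_eq_zero {n : ℕ} {y : P} {f : CGrp K P (n + 1)}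
    (hf : f ∈ supported K K {c : OChain P (n + 1) | c.1 0 ≠ y}) : topCoeff K y f = 0 := by
  refine supported_induction ?_ (fun f g hf hg => ?_) (fun d hd k => ?_) hf
  · exact map_zero _
  · rw [map_add, hf, hg, add_zero]
  · exact topCoeff_single_of_ne hd k

theorem topCoeff_mem_chainsIn {y : P} {n : ℕ} {f : CGrp K P (n + 1)} (hf : f ∈ toppedBy K y n) :
    topCoeff K y f ∈ chainsIn K P (Set.Iio y) n := by
  refine supported_induction ?_ (fun f g hf hg => ?_) (fun d hd k => ?_) hf
  · exact map_zero (topCoeff K y) ▸ zero_mem _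
  · exact map_add (topCoeff K y) f g ▸ add_mem hf hg
  · rw [topCoeff_single_of_eq hd]
    exact single_mem_supported K k fun r => (d.odel_zero_lt r).trans_eq hd

theorem cbdry_sub_topCoeff_mem_toppedBy {y : P} {n : ℕ} {f : CGrp K P (n + 2)}
    (hf : f ∈ toppedBy K y (n + 1)) :
    cbdry K P (n + 1) f - topCoeff K y f ∈ toppedBy K y n := by
  refine supported_induction ?_ (fun f g hf hg => ?_) (fun d hd k => ?_) hf
  · simp
  · rw [map_add, map_add, add_sub_add_comm]
    exact add_mem hf hg
  · rw [cbdry_single, topCoeff_single_of_eq hd, Fin.sum_univ_succ, Fin.val_zero, pow_zero,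
      one_smul, add_sub_cancel_left]
    exact sum_mem fun j _ => Submodule.smul_mem _ _ <|
      single_mem_supported K k ((d.odel_succ_apply_zero j).trans hd)

theorem topCoeff_cbdry {y : P} {n : ℕ} {f : CGrp K P (n + 2)} (hf : f ∈ toppedBy K y (n + 1)) :
    topCoeff K y (cbdry K P (n + 1) f) = -cbdry K P n (topCoeff K y f) := by
  refine supported_induction ?_ (fun f g hf hg => ?_) (fun d hd k => ?_) hf
  · simp
  · simp only [map_add, hf, hg, neg_add]
  · have hzero : (odel P 0 d).1 0 ≠ y := hd ▸ (d.odel_zero_lt 0).ne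
    have hsucc (j : Fin (n + 1)) : topCoeff K y (single (odel P j.succ d) k) =
        single (odel P j (odel P 0 d)) k := by
      rw [topCoeff_single_of_eq ((d.odel_succ_apply_zero j).trans hd), d.odel_zero_odel_succ]
    rw [cbdry_single, topCoeff_single_of_eq hd, cbdry_single, Fin.sum_univ_succ, map_add, map_sum]
    simp only [map_smul, map_neg, topCoeff_single_of_ne hzero, hsucc, smul_zero, zero_add,
      Fin.val_succ, pow_succ, mul_neg_one, neg_smul, Finset.sum_neg_distrib]

open Classical in
theorem prefixCoeff_single {a b N : ℕ} (h : a + b = N) (χ : OChain P a) (d : OChain P N)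
    (k : K) :
    prefixCoeff K h χ (single d k) =
      if d.take (Nat.le.intro h) = χ then single (d.drop h) k else 0 := by
  split_ifs with hd <;> simp [prefixCoeff, hd]

theorem prefixCoeff_eq_zero {a b N : ℕ} (h : a + b = N) {χ : OChain P a} {f : CGrp K P N}
    (hf : χ ∉ OChain.take (Nat.le.intro h) '' (f.support : Set (OChain P N))) :
    prefixCoeff K h χ f = 0 := by
  rw [prefixCoeff, lsum_apply]
  exact Finset.sum_eq_zero fun d hd => by simp [show d.take _ ≠ χ from fun hχ => hf ⟨d, hd, hχ⟩]

theorem prefixCoeff_zero {N : ℕ} (χ : OChain P 0) (f : CGrp K P N) :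
    prefixCoeff K N.zero_add χ f = f := by
  induction f using induction_linear with
  | zero => exact map_zero _
  | add f g hf hg => rw [map_add, hf, hg]
  | single d k =>
    have htake : d.take N.zero_le = χ := OChain.ext fun r => r.elim0
    have hdrop : d.drop N.zero_add = d :=
      OChain.ext fun s => congrArg d.1 (Fin.ext (Nat.zero_add s))
    rw [prefixCoeff_single, if_pos htake, hdrop]

theorem prefixCoeff_succ {a b N : ℕ} (h : a + 1 + b = N) (h' : a + (b + 1) = N)
    (χ : OChain P (a + 1)) (f : CGrp K P N) :
    prefixCoeff K h χ f =
      topCoeff K (χ.1 (Fin.last a)) (prefixCoeff K h' (χ.take a.le_succ) f) := by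
  induction f using induction_linear with
  | zero => simp only [map_zero]
  | add f g hf hg => simp only [map_add, hf, hg]
  | single d k =>
    simp only [prefixCoeff_single, apply_ite (topCoeff K (χ.1 (Fin.last a))), topCoeff_single,
      map_zero, OChain.odel_zero_drop h' h, ← ite_and]
    classical exact if_congr (OChain.take_succ_eq_iff h' _) rfl rfl

end Preorder

section PartialOrder
variable {P : Type} [PartialOrder P]

theorem initSegs_eq_image_take {m s : ℕ} (γ : CGrp K P (m + 1)) (h : s ≤ m + 1) :
    initSegs K P γ s h = OChain.take h '' (γ.support : Set (OChain P (m + 1))) :=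
  Set.ext fun _ => exists_congr fun _ => and_congr_right fun _ => (OChain.take_eq_iff h).symm

theorem concatOC_take_drop {a b : ℕ} (d : OChain P (a + b)) :
    concatOC P (d.take (Nat.le_add_right a b)) (d.drop rfl) (d.drop_lt_take rfl) = d := by
  ext r
  simp only [concatOC]
  split_ifs with hr
  · rfl
  · exact congrArg d.1 (Fin.ext (Nat.add_sub_of_le (not_lt.1 hr)))

theorem castCGrp_prependC_take_single_drop {a b N : ℕ} (h : a + b = N) (d : OChain P N)
    (k : K) :
    castCGrp K P h (prependC K P (d.take (Nat.le.intro h)) (single (d.drop h) k)) =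
      single d k := by
  subst h
  rw [prependC, lsum_single, dif_pos (d.drop_lt_take rfl), lsingle_apply, concatOC_take_drop]
  simp [castCGrp]

open Classical in
theorem castCGrp_prependC_prefixCoeff {a b N : ℕ} (h : a + b = N) (χ : OChain P a)
    (f : CGrp K P N) :
    castCGrp K P h (prependC K P χ (prefixCoeff K h χ f)) =
      f.filter fun d => d.take (Nat.le.intro h) = χ := by
  induction f using induction_linear with
  | zero => simp only [map_zero, filter_zero]
  | add f g hf hg => simp only [map_add, filter_add, hf, hg]
  | single d k =>
    rw [prefixCoeff_single]
    split_ifs with hd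
    · rw [filter_single_of_pos (OChain.take _ · = χ) hd, ← hd, castCGrp_prependC_take_single_drop]
    · rw [filter_single_of_neg (OChain.take _ · = χ) hd, map_zero, map_zero]

/-- A strictly `P`-graded subcomplex of the reduced chain complex of the order complex of `P`,
given by its graded pieces: the first two conditions on a `SynorComplex`. -/
structure IsStrictlyGraded (S : (n : ℕ) → P → Submodule K (CGrp K P (n + 1))) : Prop where
  le_toppedBy (n : ℕ) (x : P) : S n x ≤ toppedBy K x n
  cbdry_mem {n : ℕ} {x : P} {f : CGrp K P (n + 2)} (hf : f ∈ S (n + 1) x) :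
    cbdry K P (n + 1) f ∈ idealPart K P S (Set.Iio x) (n + 1)

theorem SynorComplex.isStrictlyGraded (σ : SynorComplex K P) : IsStrictlyGraded σ.S :=
  ⟨σ.graded, fun hf => σ.strict _ _ _ hf⟩

namespace IsStrictlyGraded
variable {S : (n : ℕ) → P → Submodule K (CGrp K P (n + 1))} (hS : IsStrictlyGraded S)
include hS

theorem idealPart_le_chainsIn {J : Set P} (hJ : IsLowerSet J) (n : ℕ) :
    idealPart K P S J n ≤ chainsIn K P J n := by
  cases n with
  | zero => exact fun f _ c _ r => r.elim0
  | succ n =>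
    refine iSup₂_le fun z hz => (hS.le_toppedBy n z).trans (supported_mono fun c hc r => ?_)
    exact hJ (c.2.antitone r.zero_le) (hc.symm ▸ hz)

theorem topCoeff_eq_cbdry {y : P} {n : ℕ} {f : CGrp K P (n + 2)} (hf : f ∈ S (n + 1) y) :
    topCoeff K y f = cbdry K P (n + 1) f := by
  have htop := hS.le_toppedBy _ _ hf
  have hbelow : cbdry K P (n + 1) f - topCoeff K y f ∈ chainsIn K P (Set.Iio y) (n + 1) :=
    sub_mem (hS.idealPart_le_chainsIn (isLowerSet_Iio y) _ (hS.cbdry_mem hf))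
      (topCoeff_mem_chainsIn htop)
  have hdisj : Disjoint (chainsIn K P (Set.Iio y) (n + 1)) (toppedBy K y n) :=
    disjoint_supported_supported (Set.disjoint_left.2 fun c hc => (hc 0).ne)
  exact (sub_eq_zero.1 <|
    Submodule.disjoint_def.1 hdisj _ hbelow (cbdry_sub_topCoeff_mem_toppedBy htop)).symm

theorem topCoeff_mem_cyclesAt {y : P} {n : ℕ} {f : CGrp K P (n + 1)} (hf : f ∈ S n y) :
    topCoeff K y f ∈ cyclesAt K P n := by
  cases n with
  | zero => trivial
  | succ n =>
    have hbelow := hS.idealPart_le_chainsIn (isLowerSet_Iio y) _ (hS.cbdry_mem hf)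
    have hzero : topCoeff K y (cbdry K P (n + 1) f) = 0 :=
      topCoeff_eq_zero (supported_mono (fun c hc => (hc 0).ne) hbelow)
    rwa [topCoeff_cbdry (hS.le_toppedBy _ _ hf), neg_eq_zero] at hzero

theorem topCoeff_mem_idealPart {y : P} {n : ℕ} {f : CGrp K P (n + 1)} (hf : f ∈ S n y) :
    topCoeff K y f ∈ idealPart K P S (Set.Iio y) n := by
  cases n with
  | zero => trivial
  | succ n => exact hS.topCoeff_eq_cbdry hf ▸ hS.cbdry_mem hf

theorem topCoeff_mem (y : P) {n : ℕ} {f : CGrp K P (n + 1)} (hf : f ∈ ⨆ x, S n x) :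
    topCoeff K y f ∈ cyclesAt K P n ⊓ idealPart K P S (Set.Iio y) n := by
  suffices h : ⨆ x, S n x ≤
      (cyclesAt K P n ⊓ idealPart K P S (Set.Iio y) n).comap (topCoeff K y) from h hf
  refine iSup_le fun z g hg => ?_
  obtain rfl | hzy := eq_or_ne z y
  · exact ⟨hS.topCoeff_mem_cyclesAt hg, hS.topCoeff_mem_idealPart hg⟩
  · have hzero : topCoeff K y g = 0 := topCoeff_eq_zero <|
      supported_mono (fun c hc => ne_of_eq_of_ne hc hzy) (hS.le_toppedBy n z hg)
    rw [Submodule.mem_comap, hzero]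
    exact zero_mem _

theorem prefixCoeff_mem_iSup {a n m : ℕ} (h : a + (n + 1) = m + 1) (χ : OChain P a)
    {f : CGrp K P (m + 1)} (hf : f ∈ ⨆ x, S m x) : prefixCoeff K h χ f ∈ ⨆ x, S n x := by
  induction a generalizing n with
  | zero =>
    obtain rfl : n = m := by omega
    rwa [prefixCoeff_zero]
  | succ a ih =>
    rw [prefixCoeff_succ h (by omega)]
    exact iSup₂_le_iSup (· < _) (S n) (hS.topCoeff_mem _ (ih _ _)).2

theorem prefixCoeff_mem {ℓ n m : ℕ} (h : ℓ + 1 + n = m + 1) (χ : OChain P (ℓ + 1))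
    {f : CGrp K P (m + 1)} (hf : f ∈ ⨆ x, S m x) :
    prefixCoeff K h χ f ∈
      cyclesAt K P n ⊓ idealPart K P S (Set.Iio (χ.1 (Fin.last ℓ))) n := by
  rw [prefixCoeff_succ h (by omega)]
  exact hS.topCoeff_mem _ (hS.prefixCoeff_mem_iSup _ _ hf)

end IsStrictlyGraded

theorem ell_representation_general {S : (n : ℕ) → P → Submodule K (CGrp K P (n + 1))}
    (hS : IsStrictlyGraded S) {ℓ n m : ℕ} (h : ℓ + 1 + n = m + 1) {γ : CGrp K P (m + 1)}
    (hγ : γ ∈ ⨆ x, S m x) :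
    ∃ ζ : OChain P (ℓ + 1) → CGrp K P n,
      (∀ χ, ζ χ ∈ cyclesAt K P n ⊓ idealPart K P S (Set.Iio (χ.1 (Fin.last ℓ))) n) ∧
      (∀ χ ∉ initSegs K P γ (ℓ + 1) (Nat.le.intro h), ζ χ = 0) ∧
      γ = ∑ᶠ χ ∈ initSegs K P γ (ℓ + 1) (Nat.le.intro h),
        castCGrp K P h (prependC K P χ (ζ χ)) := by
  refine ⟨fun χ => prefixCoeff K h χ γ, fun χ => hS.prefixCoeff_mem h χ hγ,
    fun χ hχ => prefixCoeff_eq_zero h ?_, ?_⟩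
  · rwa [← initSegs_eq_image_take]
  · simp only [castCGrp_prependC_prefixCoeff, initSegs_eq_image_take]
    exact (finsum_mem_image_support_filter γ _).symm

end PartialOrder

variable (K)

/-- **`ℓ`-representations.**  Let `P` be a finite poset,
`S_*(P) ⊆ C̃_*(P)` a synor complex (identified with the image of `φ`), `x ∈ P`,
`γ ∈ S_m(P)^{(x)}` a principal synor chain, and `0 ≤ ℓ ≤ m`.  Then
`γ = Σ_{χ ∈ X_ℓ^γ} χ * ζ_χ`, where each `ζ_χ` is a cycle in
`⊕_{y < min(χ)} S_{m-ℓ-1}(P)^{(y)}`. -/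
theorem ell_representation (P : Type) [PartialOrder P] [Fintype P]
    (σ : SynorComplex K P) (m ℓ : ℕ) (hℓ : ℓ ≤ m) (x : P)
    (γ : CGrp K P (m + 1)) (hγ : γ ∈ σ.S m x) :
    ∃ ζ : OChain P (ℓ + 1) → CGrp K P (m - ℓ),
      (∀ χ : OChain P (ℓ + 1),
        ζ χ ∈ cyclesAt K P (m - ℓ) ⊓
          idealPart K P σ.S (Set.Iio (χ.1 (Fin.last ℓ))) (m - ℓ)) ∧
      (∀ χ ∉ initSegs K P γ (ℓ + 1) (by omega), ζ χ = 0) ∧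
      γ = ∑ᶠ χ ∈ initSegs K P γ (ℓ + 1) (by omega),
        castCGrp K P (by omega) (prependC K P χ (ζ χ)) :=
  ell_representation_general σ.isStrictlyGraded (by omega) (Submodule.mem_iSup_of_mem x hγ)

end
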